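/- Let S be a type, step : S → S a deterministic closed-loop transition map, φ, φ₀ : S → ℝ, and η ≥ 0. Assume the safe action constraint φ(step s) < max{φ(s) − η, 0} holds at every state s, and assume the zero-sublevel set of φ is contained in the safe set, i.e. φ(s) ≤ 0 implies φ₀(s) ≤ 0 for all s. Then the set {s | φ(s) ≤ 0} ∩ {s | φ₀(s) ≤ 0} is forward invariant along trajectories: for every initial state s₀ in this set and every natural number n, the iterate step^[n](s₀) lies in {s | φ(s) ≤ 0} ∩ {s | φ₀(s) ≤ 0}. -/

import Mathlib

/-- Forward invariance of `{s | φ s ≤ 0} ∩ {s | φ₀ s ≤ 0}` along trajectories: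
if the safe action constraint holds everywhere and the zero-sublevel set of the
safety index `φ` is contained in the safe set `{s | φ₀ s ≤ 0}`, then every
iterate of `step` starting from the intersection stays in the intersection. -/
theorem forward_invariance {S : Type*} (step : S → S) (φ φ₀ : S → ℝ)
    (η : ℝ) (hη : 0 ≤ η)
    (hsafe : ∀ s : S, φ (step s) < max (φ s - η) 0)
    (hsub : ∀ s : S, φ s ≤ 0 → φ₀ s ≤ 0)
    (s₀ : S) (h₀ : s₀ ∈ {s : S | φ s ≤ 0} ∩ {s : S | φ₀ s ≤ 0}) :
    ∀ n : ℕ, step^[n] s₀ ∈ {s : S | φ s ≤ 0} ∩ {s : S | φ₀ s ≤ 0} := by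
  intro n
  induction n with
  | zero => exact h₀
  | succ k ih =>
    rw [Function.iterate_succ_apply']
    have hk : φ (step^[k] s₀) ≤ 0 := ih.1
    have h := hsafe (step^[k] s₀)
    rw [max_eq_right (by linarith)] at h
    exact ⟨h.le, hsub _ h.le⟩
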